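/- arXiv:solv-int/9810018 — 5 statements merged into one kernel-verified Lean document; each statement's English description precedes it below -/
import Mathlib

section
/- Let w : ℝ → Matrix(2,2,ℂ) be a three-times continuously differentiable curve with w(ε) ∈ SU(2) for all ε, w(0) = 1 (the identity matrix), and ω := w′(0), so that ω ∈ su(2). Then, as ε → 0: (i) tr(w(ε)) = 2 − (ε²/4)·⟨ω,ω⟩ + O(ε³); and (ii) for every a ∈ su(2), ⟨a, w(ε)·a·w(ε)⁻¹⟩ = ⟨a,a⟩ − (ε²/2)·(⟨a,a⟩⟨ω,ω⟩ − ⟨a,ω⟩²) + O(ε³). -/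
/-!
Identify `SU(2)` with the unit quaternions `x + p i + q j + r k` and `su(2)` with the purely imaginary
ones; on the latter `⟨·,·⟩` is four times the Euclidean scalar product. If `w` has real part `x` and
imaginary part `v`, then `tr w = 2x`, and since `Ad w` acts on `su(2)` as a rotation, for imaginary `a`
`⟨a, w a w⁻¹⟩ = 4 ((1 - 2|v|²)|a|² + 2 (v·a)²)` holds exactly (`ip2_conj_quat`).
Differentiating `x² + |v|² = 1` at `ε = 0` gives `x'(0) = 0`, so `ω` is imaginary, and Taylor's theorem
(`isBigO_sub_linear`) gives `x = 1 + O(ε²)` and `v = εω + O(ε²)`. Hence products of coordinates of `v`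
agree with those of `εω` up to `O(ε³)` (`isBigO_mul_sub`). This settles the second expansion, and the
first one follows from `2x = 2 - |v|² - (1 - x)²`. Only second-order Taylor control of `w` is
needed: no second derivative appears in the answer because of the unit-length constraint.
-/


open Asymptotics Matrix

attribute [local instance] Matrix.normedAddCommGroup Matrix.normedSpace

/-- Membership in the group `SU(2)` of unitary 2×2 complex matrices of determinant 1. -/
def memSU2 (g : Matrix (Fin 2) (Fin 2) ℂ) : Prop :=
  g * gᴴ = 1 ∧ gᴴ * g = 1 ∧ g.det = 1

/-- Membership in the Lie algebra `su(2)` of traceless skew-Hermitian 2×2 matrices. -/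
def memsu2 (η : Matrix (Fin 2) (Fin 2) ℂ) : Prop :=
  ηᴴ = -η ∧ Matrix.trace η = 0

/-- The real scalar product `⟨η,ζ⟩ = −2 tr(ηζ)` on `su(2)`. -/
noncomputable def ip2 (η ζ : Matrix (Fin 2) (Fin 2) ℂ) : ℝ :=
  (-2 * Matrix.trace (η * ζ)).re

/-- The quaternion `x + p i + q j + r k` as a complex 2×2 matrix. -/
def quat (x p q r : ℝ) : Matrix (Fin 2) (Fin 2) ℂ :=
  !![⟨x, p⟩, ⟨q, r⟩; ⟨-q, r⟩, ⟨x, -p⟩]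

lemma trace_quat (x p q r : ℝ) : Matrix.trace (quat x p q r) = ((2 * x : ℝ) : ℂ) := by
  apply Complex.ext <;> simp [quat, Matrix.trace_fin_two]
  ring

lemma memsu2_quat (p q r : ℝ) : memsu2 (quat 0 p q r) := by
  refine ⟨?_, by simp [trace_quat]⟩
  ext i j
  fin_cases i <;> fin_cases j <;> apply Complex.ext <;> simp [quat]

lemma memsu2.eq_quat {a : Matrix (Fin 2) (Fin 2) ℂ} (ha : memsu2 a) :
    a = quat 0 (a 0 0).im (a 0 1).re (a 0 1).im := by
  obtain ⟨h, ht⟩ := ha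
  have h00 := congrFun (congrFun h 0) 0
  have h01 := congrFun (congrFun h 0) 1
  rw [Matrix.trace_fin_two] at ht
  simp only [Matrix.conjTranspose_apply, Matrix.neg_apply, Complex.ext_iff, Complex.star_def,
    Complex.conj_re, Complex.conj_im, Complex.neg_re, Complex.neg_im, Complex.add_re,
    Complex.add_im, Complex.zero_re, Complex.zero_im] at h00 h01 ht
  ext i j
  fin_cases i <;> fin_cases j <;> apply Complex.ext <;> simp [quat] <;> linarith

/-- The inverse of an element of `SU(2)` is both its adjugate and its conjugate transpose;
comparing the two forces the quaternionic shape. -/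
lemma memSU2.entries {g : Matrix (Fin 2) (Fin 2) ℂ} (hg : memSU2 g) :
    g 1 1 = star (g 0 0) ∧ g 1 0 = -star (g 0 1) := by
  obtain ⟨-, h2, h3⟩ := hg
  have hadj : g.adjugate = gᴴ := by
    have : gᴴ * (g * g.adjugate) = gᴴ := by rw [Matrix.mul_adjugate, h3, one_smul, mul_one]
    rwa [← mul_assoc, h2, one_mul] at this
  rw [Matrix.adjugate_fin_two] at hadj
  have h00 := congrFun (congrFun hadj 0) 0
  have h10 := congrFun (congrFun hadj 1) 0
  simp only [Matrix.conjTranspose_apply] at h00 h10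
  refine ⟨by simpa using h00, ?_⟩
  simp only [Matrix.of_apply, Matrix.cons_val', Matrix.cons_val_zero, Matrix.cons_val_one,
    Matrix.cons_val_fin_one] at h10
  rw [← h10, neg_neg]

lemma eq_quat_of_entries {g : Matrix (Fin 2) (Fin 2) ℂ}
    (h : g 1 1 = star (g 0 0) ∧ g 1 0 = -star (g 0 1)) :
    g = quat (g 0 0).re (g 0 0).im (g 0 1).re (g 0 1).im := by
  ext i j
  fin_cases i <;> fin_cases j <;> apply Complex.ext <;> simp [quat, h.1, h.2]

lemma memSU2.norm_eq {g : Matrix (Fin 2) (Fin 2) ℂ} (hg : memSU2 g) :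
    (g 0 0).re ^ 2 + (g 0 0).im ^ 2 + (g 0 1).re ^ 2 + (g 0 1).im ^ 2 = 1 := by
  have h := hg.2.2
  rw [Matrix.det_fin_two, hg.entries.1, hg.entries.2] at h
  have := congrArg Complex.re h
  simp at this
  linarith

lemma conjTranspose_quat (x p q r : ℝ) : (quat x p q r)ᴴ = quat x (-p) (-q) (-r) := by
  ext i j
  fin_cases i <;> fin_cases j <;> apply Complex.ext <;> simp [quat]

lemma quat_mul (x p q r x' p' q' r' : ℝ) :
    quat x p q r * quat x' p' q' r' =
      quat (x * x' - p * p' - q * q' - r * r') (x * p' + p * x' + q * r' - r * q')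
        (x * q' - p * r' + q * x' + r * p') (x * r' + p * q' - q * p' + r * x') := by
  ext i j
  fin_cases i <;> fin_cases j <;> apply Complex.ext <;> simp [quat] <;> ring

lemma ip2_quat (p q r x' p' q' r' : ℝ) :
    ip2 (quat 0 p q r) (quat x' p' q' r') = 4 * (p * p' + q * q' + r * r') := by
  rw [ip2, quat_mul, trace_quat]
  simp
  ring

/-- The matrix coefficient at `a` of the rotation by which a unit quaternion acts on the imaginary
quaternions. -/
lemma ip2_conj_quat {x p q r : ℝ} (h : x ^ 2 + p ^ 2 + q ^ 2 + r ^ 2 = 1) (a b c : ℝ) :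
    ip2 (quat 0 a b c) (quat x p q r * quat 0 a b c * (quat x p q r)ᴴ) =
      4 * ((1 - 2 * (p ^ 2 + q ^ 2 + r ^ 2)) * (a ^ 2 + b ^ 2 + c ^ 2)
        + 2 * (p * a + q * b + r * c) ^ 2) := by
  rw [conjTranspose_quat, quat_mul, quat_mul, ip2_quat]
  linear_combination 4 * (a ^ 2 + b ^ 2 + c ^ 2) * h

/-- First-order Taylor expansion with quadratic remainder. -/
lemma isBigO_sub_linear {E : Type*} [NormedAddCommGroup E] [NormedSpace ℝ E] {f : ℝ → E} {f' : E}
    (hf : ContDiff ℝ 2 f) (hf' : HasDerivAt f f' 0) :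
    (fun ε : ℝ => f ε - (f 0 + ε • f')) =O[nhds (0 : ℝ)] fun ε : ℝ => ε ^ 2 := by
  have h := (taylor_isLittleO_univ (n := 2) (x₀ := (0 : ℝ)) hf).isBigO
  simp only [taylorWithinEval_succ, taylor_within_zero_eval, sub_zero,
    iteratedDerivWithin_univ] at h
  have h2 : (fun ε : ℝ => ((2 : ℝ)⁻¹ * ε ^ 2) • iteratedDeriv 2 f 0)
      =O[nhds (0 : ℝ)] fun ε : ℝ => ε ^ 2 := by
    refine IsBigO.of_bound (2⁻¹ * ‖iteratedDeriv 2 f 0‖) (Filter.Eventually.of_forall fun ε => ?_)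
    rw [norm_smul, norm_mul, Real.norm_of_nonneg (by norm_num : (0 : ℝ) ≤ 2⁻¹)]
    exact le_of_eq (by ring)
  refine (h.add h2).congr_left fun ε => ?_
  norm_num [iteratedDeriv_one, hf'.deriv]
  abel

lemma isBigO_linear {u : ℝ → ℝ} {α : ℝ}
    (hu : (fun ε => u ε - ε * α) =O[nhds (0 : ℝ)] fun ε : ℝ => ε ^ 2) :
    u =O[nhds (0 : ℝ)] fun ε : ℝ => ε := by
  have h1 : (fun ε : ℝ => ε ^ 2) =O[nhds (0 : ℝ)] fun ε : ℝ => ε := 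
    (isLittleO_pow_id one_lt_two).isBigO
  have h2 : (fun ε : ℝ => ε * α) =O[nhds (0 : ℝ)] fun ε : ℝ => ε := by
    simpa [mul_comm] using (isBigO_refl (fun ε : ℝ => ε) (nhds 0)).const_mul_left α
  simpa using (hu.trans h1).add h2

lemma isBigO_mul_sub {u v : ℝ → ℝ} {α β : ℝ}
    (hu : (fun ε => u ε - ε * α) =O[nhds (0 : ℝ)] fun ε : ℝ => ε ^ 2)
    (hv : (fun ε => v ε - ε * β) =O[nhds (0 : ℝ)] fun ε : ℝ => ε ^ 2) :
    (fun ε => u ε * v ε - ε ^ 2 * (α * β)) =O[nhds (0 : ℝ)] fun ε : ℝ => ε ^ 3 := by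
  have h1 := hu.mul (isBigO_linear hv)
  have h2 := ((isBigO_refl (fun ε : ℝ => ε) (nhds 0)).const_mul_left α).mul hv
  have h3 : ∀ ε : ℝ, ε ^ 2 * ε = ε ^ 3 := fun ε => by ring
  have h4 : ∀ ε : ℝ, ε * ε ^ 2 = ε ^ 3 := fun ε => by ring
  refine ((h1.congr_right h3).add (h2.congr_right h4)).congr_left fun ε => ?_
  ring

/-- If `w : ℝ → SU(2)` is a C³ curve with `w(0) = 1` and `ω := w′(0)` (so `ω ∈ su(2)`),
then `tr(w(ε)) = 2 − (ε²/4)⟨ω,ω⟩ + O(ε³)` and, for every `a ∈ su(2)`,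
`⟨a, w(ε)·a·w(ε)⁻¹⟩ = ⟨a,a⟩ − (ε²/2)(⟨a,a⟩⟨ω,ω⟩ − ⟨a,ω⟩²) + O(ε³)`. -/
theorem su2_curve_expansions (w : ℝ → Matrix (Fin 2) (Fin 2) ℂ)
    (hw : ContDiff ℝ 3 w) (hSU : ∀ ε : ℝ, memSU2 (w ε)) (hw0 : w 0 = 1)
    (ω : Matrix (Fin 2) (Fin 2) ℂ) (hω : HasDerivAt w ω 0) :
    memsu2 ω ∧
    ((fun ε : ℝ => Matrix.trace (w ε) - ((2 - ε ^ 2 / 4 * ip2 ω ω : ℝ) : ℂ))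
      =O[nhds (0 : ℝ)] fun ε : ℝ => ε ^ 3) ∧
    (∀ a : Matrix (Fin 2) (Fin 2) ℂ, memsu2 a →
      (fun ε : ℝ => ip2 a (w ε * a * (w ε)⁻¹)
          - (ip2 a a - ε ^ 2 / 2 * (ip2 a a * ip2 ω ω - (ip2 a ω) ^ 2)))
        =O[nhds (0 : ℝ)] fun ε : ℝ => ε ^ 3) := by
  have hd : ∀ i j, HasDerivAt (fun ε => w ε i j) (ω i j) 0 := fun i j =>
    hasDerivAt_pi.1 (hasDerivAt_pi.1 hω i) j
  have hre : ∀ i j, HasDerivAt (fun ε => (w ε i j).re) (ω i j).re 0 := fun i j =>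
    Complex.reCLM.hasFDerivAt.comp_hasDerivAt (0 : ℝ) (hd i j)
  have him : ∀ i j, HasDerivAt (fun ε => (w ε i j).im) (ω i j).im 0 := fun i j =>
    Complex.imCLM.hasFDerivAt.comp_hasDerivAt (0 : ℝ) (hd i j)
  have hc : ∀ i j, ContDiff ℝ 2 (fun ε => w ε i j) := fun i j =>
    (contDiff_pi.1 (contDiff_pi.1 (hw.of_le (by norm_num)) i) j)
  have hcre : ∀ i j, ContDiff ℝ 2 (fun ε => (w ε i j).re) := fun i j =>
    Complex.reCLM.contDiff.comp (hc i j)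
  have hcim : ∀ i j, ContDiff ℝ 2 (fun ε => (w ε i j).im) := fun i j =>
    Complex.imCLM.contDiff.comp (hc i j)
  have hωe : ω 1 1 = star (ω 0 0) ∧ ω 1 0 = -star (ω 0 1) := by
    constructor
    · refine (hd 1 1).unique ?_
      simp_rw [fun ε => (hSU ε).entries.1]
      exact (hd 0 0).star
    · refine (hd 1 0).unique ?_
      simp_rw [fun ε => (hSU ε).entries.2]
      exact (hd 0 1).star.neg
  -- Differentiating the unit-length constraint at the identity kills the real part of `ω`.
  have hωre : (ω 0 0).re = 0 := by
    have h := ((((hre 0 0).pow 2).add ((him 0 0).pow 2)).add ((hre 0 1).pow 2)).add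
      ((him 0 1).pow 2)
    have h1 : HasDerivAt (fun _ : ℝ => (1 : ℝ)) 0 0 := hasDerivAt_const _ _
    have h2 := h.unique (h1.congr_of_eventuallyEq
      (Filter.Eventually.of_forall fun ε => (hSU ε).norm_eq))
    simpa [hw0] using h2
  have hωq := eq_quat_of_entries hωe
  rw [hωre] at hωq
  have hx : (fun ε => 1 - (w ε 0 0).re) =O[nhds (0 : ℝ)] fun ε : ℝ => ε ^ 2 := by
    refine (isBigO_sub_linear (hcre 0 0) (hre 0 0)).neg_left.congr_left fun ε => ?_
    simp [hw0, hωre]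
  have hp : (fun ε => (w ε 0 0).im - ε * (ω 0 0).im) =O[nhds (0 : ℝ)] fun ε : ℝ => ε ^ 2 := by
    simpa [hw0] using isBigO_sub_linear (hcim 0 0) (him 0 0)
  have hq : (fun ε => (w ε 0 1).re - ε * (ω 0 1).re) =O[nhds (0 : ℝ)] fun ε : ℝ => ε ^ 2 := by
    simpa [hw0] using isBigO_sub_linear (hcre 0 1) (hre 0 1)
  have hr : (fun ε => (w ε 0 1).im - ε * (ω 0 1).im) =O[nhds (0 : ℝ)] fun ε : ℝ => ε ^ 2 := by
    simpa [hw0] using isBigO_sub_linear (hcim 0 1) (him 0 1)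
  have hwq : ∀ ε, w ε = quat (w ε 0 0).re (w ε 0 0).im (w ε 0 1).re (w ε 0 1).im := fun ε =>
    eq_quat_of_entries (hSU ε).entries
  have hn : ∀ ε, (w ε 0 0).re ^ 2 + (w ε 0 0).im ^ 2 + (w ε 0 1).re ^ 2 + (w ε 0 1).im ^ 2 = 1 :=
    fun ε => (hSU ε).norm_eq
  have hinv : ∀ ε, (w ε)⁻¹ = (w ε)ᴴ := fun ε => Matrix.inv_eq_right_inv (hSU ε).1
  generalize (ω 0 0).im = α at hωq hp
  generalize (ω 0 1).re = β at hωq hq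
  generalize (ω 0 1).im = γ at hωq hr
  generalize hX : (fun ε => (w ε 0 0).re) = X at *
  generalize hP : (fun ε => (w ε 0 0).im) = P at *
  generalize hQ : (fun ε => (w ε 0 1).re) = Q at *
  generalize hR : (fun ε => (w ε 0 1).im) = R at *
  simp only [fun ε => congrFun hX ε, fun ε => congrFun hP ε, fun ε => congrFun hQ ε,
    fun ε => congrFun hR ε] at hx hp hq hr hwq hn
  have hsq := ((isBigO_mul_sub hp hp).add (isBigO_mul_sub hq hq)).add (isBigO_mul_sub hr hr)
  subst hωq
  refine ⟨memsu2_quat _ _ _, ?_, fun a ha => ?_⟩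
  · have hx4 : (fun ε => (1 - X ε) * (1 - X ε)) =O[nhds (0 : ℝ)] fun ε : ℝ => ε ^ 3 := by
      refine (hx.mul hx).trans ?_
      simpa only [← pow_add] using
        (isLittleO_pow_pow (𝕜 := ℝ) (by norm_num : 3 < 2 + 2)).isBigO
    refine IsBigO.congr_left (f₁ := fun ε =>
      ((-((P ε * P ε - ε ^ 2 * (α * α)) + (Q ε * Q ε - ε ^ 2 * (β * β))
        + (R ε * R ε - ε ^ 2 * (γ * γ))) - (1 - X ε) * (1 - X ε) : ℝ) : ℂ)) ?_ fun ε => ?_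
    · exact (Complex.isBigO_ofReal_left).2 (hsq.neg_left.sub hx4)
    · rw [hwq ε, trace_quat, ← Complex.ofReal_sub, ip2_quat]
      congr 1
      linear_combination -(hn ε)
  · have haq := ha.eq_quat
    generalize (a 0 0).im = a₁ at haq
    generalize (a 0 1).re = a₂ at haq
    generalize (a 0 1).im = a₃ at haq
    subst haq
    have hdot : (fun ε => (P ε * a₁ + Q ε * a₂ + R ε * a₃)
        - ε * (α * a₁ + β * a₂ + γ * a₃)) =O[nhds (0 : ℝ)] fun ε : ℝ => ε ^ 2 := by
      refine (((hp.const_mul_left a₁).add (hq.const_mul_left a₂)).add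
        (hr.const_mul_left a₃)).congr_left fun ε => ?_
      ring
    refine ((hsq.const_mul_left (-8 * (a₁ ^ 2 + a₂ ^ 2 + a₃ ^ 2))).add
      ((isBigO_mul_sub hdot hdot).const_mul_left 8)).congr_left fun ε => ?_
    rw [hinv, hwq ε, ip2_conj_quat (hn ε), ip2_quat, ip2_quat, ip2_quat]
    ring
end

section
/- Let ε ∈ ℝ and m, a ∈ su(2). Then the matrix 1 + ε·m is invertible, the matrix a′ := (1 + ε·m)·a·(1 + ε·m)⁻¹ belongs to su(2), and a′ is the unique element X ∈ su(2) satisfying X − a = (ε/2)·[m, a + X]. -/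
/-!
For traceless `2 × 2` matrices the anticommutator is scalar, `mX + Xm = tr(mX) • 1`, and for
`m ∈ su(2)` moreover `m² = -r • 1` with `r ≥ 0`. With `U = 1 + εm` the second fact gives
`U Uᴴ = (1 + ε²r) • 1`, so `U` is invertible and `a′ = (1 + ε²r)⁻¹ • U a Uᴴ` is again in `su(2)`.

If `tr(mX) = tr(ma)`, then `mX + Xm = ma + am`, and under this identity the equation
`X - a = (ε/2)[m, a + X]` is the same as `X - a = ε(ma - Xm)`, i.e. `X U = U a`
(`step_iff`). The trace condition holds for `X = a′` because `U` commutes with `m`, and for any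
solution `X` because `tr(m[m, a + X]) = 0`.
-/

open Matrix

lemma anticomm_of_trace_eq_zero {m X : Matrix (Fin 2) (Fin 2) ℂ}
    (hm : trace m = 0) (hX : trace X = 0) : m * X + X * m = trace (m * X) • 1 := by
  rw [trace_fin_two] at hm hX
  have h1 : m 1 1 = -m 0 0 := by linear_combination hm
  have h2 : X 1 1 = -X 0 0 := by linear_combination hX
  ext i j
  fin_cases i <;> fin_cases j <;>
    simp [mul_apply, Fin.sum_univ_two, trace_fin_two, h1, h2] <;> ring

/-- Cayley–Hamilton for `m ∈ su(2)`: the number `r` is `det m = |m₀₀|² + |m₀₁|²`. -/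
lemma memsu2.exists_sq_eq {m : Matrix (Fin 2) (Fin 2) ℂ} (hm : memsu2 m) :
    ∃ r : ℝ, 0 ≤ r ∧ m * m = (-r) • (1 : Matrix (Fin 2) (Fin 2) ℂ) := by
  obtain ⟨hs, ht⟩ := hm
  rw [trace_fin_two] at ht
  have h1 : m 1 1 = -m 0 0 := by linear_combination ht
  have h00 : (starRingEnd ℂ) (m 0 0) = -m 0 0 := by simpa using congrFun₂ hs 0 0
  have h10 : (starRingEnd ℂ) (m 0 1) = -m 1 0 := by simpa using congrFun₂ hs 1 0
  refine ⟨Complex.normSq (m 0 0) + Complex.normSq (m 0 1),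
    add_nonneg (Complex.normSq_nonneg _) (Complex.normSq_nonneg _), ?_⟩
  ext i j
  fin_cases i <;> fin_cases j <;>
    simp [mul_apply, Fin.sum_univ_two, h1, ← Complex.mul_conj, h00, h10] <;> ring

/-- When `m` has the same anticommutator with `X` and with `a`, the implicit step equation says
exactly that `1 + εm` intertwines `a` and `X`. -/
lemma step_iff {ε : ℝ} {m a X : Matrix (Fin 2) (Fin 2) ℂ}
    (h : m * X + X * m = m * a + a * m) :
    X - a = (ε / 2) • ⁅m, a + X⁆ ↔ X * (1 + ε • m) = (1 + ε • m) * a := by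
  have key : (ε / 2) • ⁅m, a + X⁆ = ε • (m * a - X * m) := by
    have hb : ⁅m, a + X⁆ = (2 : ℝ) • (m * a - X * m) := by
      rw [Ring.lie_def, two_smul, mul_add, add_mul, ← sub_eq_zero]
      calc _ = (m * X + X * m) - (m * a + a * m) := by abel
        _ = 0 := sub_eq_zero.2 h
    rw [hb, smul_smul, div_mul_cancel₀ _ two_ne_zero]
  rw [key, mul_add, add_mul, mul_one, one_mul, Matrix.mul_smul, Matrix.smul_mul, smul_sub,
    sub_eq_sub_iff_add_eq_add, add_comm (ε • (m * a)) a]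

/-- For `ε ∈ ℝ` and `m, a ∈ su(2)`, the matrix `1 + εm` is invertible,
`a′ := (1 + εm)·a·(1 + εm)⁻¹` lies in `su(2)`, and `a′` is the unique `X ∈ su(2)`
with `X − a = (ε/2)[m, a + X]`. -/
theorem discrete_axis_step_su2 (ε : ℝ) (m a : Matrix (Fin 2) (Fin 2) ℂ)
    (hm : memsu2 m) (ha : memsu2 a) :
    IsUnit (1 + ε • m) ∧
    memsu2 ((1 + ε • m) * a * (1 + ε • m)⁻¹) ∧
    ((1 + ε • m) * a * (1 + ε • m)⁻¹ - a
        = (ε / 2) • ⁅m, a + (1 + ε • m) * a * (1 + ε • m)⁻¹⁆) ∧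
    (∀ X : Matrix (Fin 2) (Fin 2) ℂ, memsu2 X →
      X - a = (ε / 2) • ⁅m, a + X⁆ → X = (1 + ε • m) * a * (1 + ε • m)⁻¹) := by
  obtain ⟨r, hr, hsq⟩ := hm.exists_sq_eq
  have hc : (1 + ε ^ 2 * r : ℝ) ≠ 0 := by positivity
  set U := 1 + ε • m with hU
  have hUH : Uᴴ = 1 - ε • m := by
    simp [hU, conjTranspose_add, conjTranspose_smul, hm.1, sub_eq_add_neg]
  have hUU : U * Uᴴ = (1 + ε ^ 2 * r) • (1 : Matrix (Fin 2) (Fin 2) ℂ) := by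
    rw [hUH, hU, add_mul, one_mul, mul_sub, mul_one, Matrix.smul_mul, Matrix.mul_smul, hsq]
    module
  have hright : U * ((1 + ε ^ 2 * r)⁻¹ • Uᴴ) = 1 := by
    rw [Matrix.mul_smul, hUU, smul_smul, inv_mul_cancel₀ hc, one_smul]
  have hinv : U⁻¹ = (1 + ε ^ 2 * r)⁻¹ • Uᴴ := inv_eq_right_inv hright
  have hdet : IsUnit U.det := isUnit_det_of_right_inverse hright
  have hcomm : m * U = U * m := by
    simp [hU, mul_add, add_mul]
  have hmem : memsu2 (U * a * U⁻¹) := by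
    constructor
    · rw [hinv]
      simp [conjTranspose_mul, conjTranspose_smul, ha.1, Matrix.mul_assoc]
    · rw [trace_mul_comm, nonsing_inv_mul_cancel_left _ _ hdet, ha.2]
  -- Equality of `tr(m ·)` is all that is needed to pass between the two forms of the equation.
  have hanti : ∀ X, memsu2 X → trace (m * X) = trace (m * a) →
      m * X + X * m = m * a + a * m := fun X hX h => by
    rw [anticomm_of_trace_eq_zero hm.2 hX.2, anticomm_of_trace_eq_zero hm.2 ha.2, h]
  refine ⟨(isUnit_iff_isUnit_det U).2 hdet, hmem, ?_, fun X hX h => ?_⟩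
  · refine (step_iff (hanti _ hmem ?_)).2 (nonsing_inv_mul_cancel_right _ _ hdet)
    rw [← Matrix.mul_assoc, ← Matrix.mul_assoc, hcomm, trace_mul_comm, Matrix.mul_assoc U,
      nonsing_inv_mul_cancel_left _ _ hdet]
  · have htr : trace (m * X) = trace (m * a) := by
      have h0 : trace (m * ⁅m, a + X⁆) = 0 := by
        rw [Ring.lie_def, mul_sub, trace_sub, ← Matrix.mul_assoc m (a + X) m,
          trace_mul_comm (m * (a + X)) m, sub_self]
      rw [← sub_eq_zero, ← trace_sub, ← mul_sub, h, Matrix.mul_smul, trace_smul, h0, smul_zero]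
    have hX' := (step_iff (hanti X hX htr)).1 h
    rw [← hX', mul_nonsing_inv_cancel_right _ _ hdet]
end

section
/- Let ε ∈ ℝ and a, m, p ∈ su(2) with ⟨a, a⟩ = 1. Define m′ := m + ε·[p, a], and let a′ := (1 + ε·m′)·a·(1 + ε·m′)⁻¹ (the matrix 1 + ε·m′ is invertible). Then for every λ ∈ ℝ the Lax matrices ℓ(λ) := λ²·(a + (ε/2)·[a, m] + (ε²/4)·p) + λ·m + p, ℓ′(λ) := λ²·(a′ + (ε/2)·[a′, m′] + (ε²/4)·p) + λ·m′ + p, and u(λ) := 1 + ε·λ·a satisfy u(λ)·ℓ′(λ) = ℓ(λ)·u(λ); equivalently, ℓ′(λ) = u(λ)⁻¹·ℓ(λ)·u(λ) whenever u(λ) is invertible. -/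
open Matrix

/-!
Comparing coefficients of `λ` in `u ℓ' = ℓ u` reduces the claim to four identities. That of degree
one is the definition of `m'`. In degree two one needs that the anticommutator of `a` and `m'`
is not changed when `a` is replaced by `a'`: in `su(2)` it is a scalar, hence invariant under
conjugation by `1 + εm'`, which commutes with `m'` (`anticomm_conj`). With this the equation
`a'(1 + εm') = (1 + εm')a` becomes `a' + (ε/2)[a',m'] = a + (ε/2)[m',a]`, and degrees two and three
follow from `a² = -1/4`, the normalisation `⟨a,a⟩ = 1` (`lax_of_anticomm`). The matrix `1 + εm'` is
invertible because its determinant is `1 + ε² det m'` and `det m' ≥ 0` on `su(2)`.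
-/

/-- The Lax equation as an identity in an arbitrary real algebra: only the scalar value of `a²`,
the intertwining relation for `a'` and the preservation of the anticommutator with `m'` enter. -/
theorem lax_of_anticomm {R : Type*} [Ring R] [Algebra ℝ R] (ε l : ℝ) (a m p m' a' : R)
    (hsq : a * a = (-(1 / 4) : ℝ) • (1 : R))
    (hm' : m' = m + ε • (p * a - a * p))
    (hconj : a' * (1 + ε • m') = (1 + ε • m') * a)
    (hanti : a' * m' + m' * a' = a * m' + m' * a) :
    (1 + (ε * l) • a) *
        ((l ^ 2 : ℝ) • (a' + (ε / 2) • (a' * m' - m' * a') + (ε ^ 2 / 4) • p) + l • m' + p)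
      = ((l ^ 2 : ℝ) • (a + (ε / 2) • (a * m - m * a) + (ε ^ 2 / 4) • p) + l • m + p) *
          (1 + (ε * l) • a) := by
  have hX : a' + (ε / 2) • (a' * m' - m' * a') = a + (ε / 2) • (m' * a - a * m') := by
    simp only [mul_add, add_mul, mul_one, one_mul, smul_mul_assoc, mul_smul_comm] at hconj
    linear_combination (norm := module) hconj - (ε / 2) • hanti
  have hsq' : ∀ x : R, a * (a * x) = (-(1 / 4) : ℝ) • x := fun x => by
    rw [← mul_assoc, hsq, smul_mul_assoc, one_mul]
  rw [hX, hm']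
  simp only [mul_add, add_mul, mul_sub, sub_mul, mul_one, one_mul, smul_mul_assoc, mul_smul_comm,
    mul_assoc, hsq, hsq']
  module

/-- If the anticommutator of `a` and `n` is a scalar, it does not change when `a` is conjugated
by the element `1 + εn`, which commutes with `n`. -/
theorem anticomm_conj (ε : ℝ) (a n b : Matrix (Fin 2) (Fin 2) ℂ)
    (hu : IsUnit (1 + ε • n)) (hc : ∃ c : ℂ, a * n + n * a = c • 1)
    (hb : b * (1 + ε • n) = (1 + ε • n) * a) :
    b * n + n * b = a * n + n * a := by
  obtain ⟨c, hc⟩ := hc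
  have hcomm : (1 + ε • n) * n = n * (1 + ε • n) := by
    simp [mul_add, add_mul]
  apply hu.mul_right_cancel
  calc (b * n + n * b) * (1 + ε • n)
      = b * ((1 + ε • n) * n) + n * (b * (1 + ε • n)) := by rw [hcomm]; simp only [add_mul, mul_assoc]
    _ = (1 + ε • n) * (a * n) + n * (1 + ε • n) * a := by
        rw [← mul_assoc, hb]; simp only [mul_assoc]
    _ = (1 + ε • n) * (a * n + n * a) := by rw [← hcomm]; simp only [mul_add, mul_assoc]
    _ = (a * n + n * a) * (1 + ε • n) := by simp [hc]

/-- Coordinates on `su(2)`. -/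
theorem memsu2.exists_eq {x : Matrix (Fin 2) (Fin 2) ℂ} (hx : memsu2 x) :
    ∃ r s t : ℝ, x = !![⟨0, r⟩, ⟨s, t⟩; ⟨-s, t⟩, ⟨0, -r⟩] := by
  obtain ⟨h, ht⟩ := hx
  have h00 := congrFun (congrFun h 0) 0
  have h01 := congrFun (congrFun h 0) 1
  simp only [trace_fin_two, Complex.ext_iff, conjTranspose_apply, Matrix.neg_apply, Complex.star_def,
    Complex.conj_re, Complex.conj_im, Complex.neg_re, Complex.neg_im, Complex.add_re,
    Complex.add_im, Complex.zero_re, Complex.zero_im] at h00 h01 ht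
  refine ⟨(x 0 0).im, (x 0 1).re, (x 0 1).im, ?_⟩
  ext i j
  fin_cases i <;> fin_cases j <;> apply Complex.ext <;> simp <;> linarith

theorem memsu2.add_smul_lie {m p a : Matrix (Fin 2) (Fin 2) ℂ} (ε : ℝ) (hm : memsu2 m)
    (hp : memsu2 p) (ha : memsu2 a) : memsu2 (m + ε • ⁅p, a⁆) := by
  constructor
  · rw [Ring.lie_def, conjTranspose_add, conjTranspose_smul, conjTranspose_sub,
      conjTranspose_mul, conjTranspose_mul, hm.1, hp.1, ha.1]
    simp only [star_trivial, neg_mul_neg]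
    module
  · rw [Ring.lie_def, trace_add, trace_smul, trace_sub, trace_mul_comm p a, hm.2]
    simp

theorem memsu2.anticomm_scalar {x y : Matrix (Fin 2) (Fin 2) ℂ} (hx : memsu2 x)
    (hy : memsu2 y) : ∃ c : ℂ, x * y + y * x = c • 1 := by
  refine ⟨trace (x * y), ?_⟩
  obtain ⟨r, s, t, rfl⟩ := hx.exists_eq
  obtain ⟨r', s', t', rfl⟩ := hy.exists_eq
  ext i j
  fin_cases i <;> fin_cases j <;> apply Complex.ext <;>
    simp [trace_fin_two] <;> ring

theorem memsu2.sq_eq {a : Matrix (Fin 2) (Fin 2) ℂ} (ha : memsu2 a) (haa : ip2 a a = 1) :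
    a * a = (-(1 / 4) : ℝ) • (1 : Matrix (Fin 2) (Fin 2) ℂ) := by
  obtain ⟨r, s, t, rfl⟩ := ha.exists_eq
  simp [ip2, trace_fin_two] at haa
  ext i j
  fin_cases i <;> fin_cases j <;> apply Complex.ext <;> simp <;> linarith

theorem memsu2.isUnit_one_add_smul {n : Matrix (Fin 2) (Fin 2) ℂ} (ε : ℝ) (hn : memsu2 n) :
    IsUnit (1 + ε • n) := by
  obtain ⟨r, s, t, rfl⟩ := hn.exists_eq
  rw [Matrix.isUnit_iff_isUnit_det, isUnit_iff_ne_zero, det_fin_two]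
  intro h
  have h' := congrArg Complex.re h
  simp at h'
  nlinarith [sq_nonneg (ε * r), sq_nonneg (ε * s), sq_nonneg (ε * t)]

/-- Lax representation for one step of the discrete-time Lagrange top in the rest frame,
written in `su(2)`: with `m′ = m + ε[p,a]`, `a′ = (1+εm′)a(1+εm′)⁻¹` (`1+εm′` being
invertible), the matrices `ℓ(λ) = λ²(a + (ε/2)[a,m] + (ε²/4)p) + λm + p`,
`ℓ′(λ) = λ²(a′ + (ε/2)[a′,m′] + (ε²/4)p) + λm′ + p`, `u(λ) = 1 + ελa` satisfy
`u(λ)ℓ′(λ) = ℓ(λ)u(λ)`, i.e. `ℓ′(λ) = u(λ)⁻¹ℓ(λ)u(λ)` whenever `u(λ)` is invertible. -/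
theorem discrete_rest_frame_Lax (ε : ℝ) (a m p : Matrix (Fin 2) (Fin 2) ℂ)
    (ha : memsu2 a) (hm : memsu2 m) (hp : memsu2 p)
    (haa : ip2 a a = 1)
    (m' a' : Matrix (Fin 2) (Fin 2) ℂ)
    (hm' : m' = m + ε • ⁅p, a⁆)
    (ha' : a' = (1 + ε • m') * a * (1 + ε • m')⁻¹) :
    IsUnit (1 + ε • m') ∧
    ∀ lam : ℝ,
      ((1 + (ε * lam) • a) *
          ((lam ^ 2 : ℝ) • (a' + (ε / 2) • ⁅a', m'⁆ + (ε ^ 2 / 4) • p) + lam • m' + p)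
        = ((lam ^ 2 : ℝ) • (a + (ε / 2) • ⁅a, m⁆ + (ε ^ 2 / 4) • p) + lam • m + p) *
          (1 + (ε * lam) • a)) ∧
      (IsUnit (1 + (ε * lam) • a) →
        (lam ^ 2 : ℝ) • (a' + (ε / 2) • ⁅a', m'⁆ + (ε ^ 2 / 4) • p) + lam • m' + p
          = (1 + (ε * lam) • a)⁻¹ *
              (((lam ^ 2 : ℝ) • (a + (ε / 2) • ⁅a, m⁆ + (ε ^ 2 / 4) • p) + lam • m + p) *
                (1 + (ε * lam) • a))) := by
  have hn : memsu2 m' := hm' ▸ hm.add_smul_lie ε hp ha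
  have hu : IsUnit (1 + ε • m') := hn.isUnit_one_add_smul ε
  have hconj : a' * (1 + ε • m') = (1 + ε • m') * a := by
    rw [ha', mul_assoc, Matrix.nonsing_inv_mul _ ((Matrix.isUnit_iff_isUnit_det _).1 hu), mul_one]
  have hanti := anticomm_conj ε a m' a' hu (ha.anticomm_scalar hn) hconj
  refine ⟨hu, fun lam => ?_⟩
  simp only [Ring.lie_def] at hm' ⊢
  have key := lax_of_anticomm ε lam a m p m' a' (ha.sq_eq haa) hm' hconj hanti
  refine ⟨key, fun hul => ?_⟩
  rw [← key, ← mul_assoc, Matrix.nonsing_inv_mul _ ((Matrix.isUnit_iff_isUnit_det _).1 hul),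
    one_mul]
end

section
/- Let ε ∈ ℝ, α ≠ 0, and A, M, P ∈ su(2) with ⟨A, A⟩ = 1. Let W ∈ SU(2) with tr(W) ≠ 0, and define M′ := W⁻¹·(M + ε·[P, A])·W, P′ := W⁻¹·P·W, and Ã := (1 + ε·M′)⁻¹·A·(1 + ε·M′) (the matrix 1 + ε·M′ is invertible). Assume 1 + ⟨A, Ã⟩ ≠ 0 and that W satisfies the relation 2·Im(W)/tr(W) = (ε/α)·M′ + (2(1−α)/α)·[A, Ã]/(1 + ⟨A, Ã⟩). Then ⟨M′, A⟩ = ⟨M, A⟩ and H_ε(M′, P′) = H_ε(M, P), where H_ε(M, P) := ½⟨M, M⟩ + ⟨P, A⟩ + (ε/2)·⟨[M, P], A⟩. -/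
/-!
Put `X = ε M'`. Since `X² = -r` with `r ≥ 0`, `1 + X` is invertible with inverse
`(1 + r)⁻¹ (1 - X)`, so `Ã` is again a unit vector of `su(2)` and `A (1 + X) = (1 + X) Ã`.

The key point is that `W` conjugates `A` to the same `Ã`. Indeed `W` is a multiple of `1 + Y`
with `Y = X / α + k [A, Ã]`, and `A (1 + Y) = (1 + Y) Ã` means `Y Ã - A Y = A - Ã`. The first
term of `Y` contributes `(A - Ã) / α`; as `A² = Ã² = -1/4` and `A Ã + Ã A = -⟨A, Ã⟩ / 2`, the
second contributes `-k (1 + ⟨A, Ã⟩) / 2 · (A - Ã)`, and the value of `k` makes the coefficients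
add up to `1` (`cayley_shift`).

Hence `⟨M, A⟩ = ⟨W⁻¹ (M + ε [P, A]) W, W⁻¹ A W⟩ = ⟨M', Ã⟩ = ⟨M', A⟩`, the last step because
`1 + X` commutes with `M'`. For the energy, conjugating the old quantities by `W` turns the claim
into an identity in `M', P', A, Ã`, whose defect is the pairing of `P'` with
`A - Ã - (ε / 2) [M', A + Ã]`; this vanishes, being the average of `A - Ã = X Ã - A X` and its
adjoint (`energy_balance`).
-/


open Matrix

/-- The `su(2)`-part `Im(g) := g − (tr(g)/2)·1` of a matrix `g`. -/
noncomputable def imPart (g : Matrix (Fin 2) (Fin 2) ℂ) : Matrix (Fin 2) (Fin 2) ℂ :=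
  g - (Matrix.trace g / 2) • 1

/-- Elements of `su(2)` square to non-positive real scalars. -/
lemma memsu2.sq_eq_s12 {X : Matrix (Fin 2) (Fin 2) ℂ} (hX : memsu2 X) :
    ∃ r : ℝ, 0 ≤ r ∧ X * X = -(r • (1 : Matrix (Fin 2) (Fin 2) ℂ)) := by
  obtain ⟨h1, h2⟩ := hX
  have h00 : star (X 0 0) = -X 0 0 := by simpa using congrFun (congrFun h1 0) 0
  have h01 : star (X 0 1) = -X 1 0 := by simpa using congrFun (congrFun h1 1) 0
  have h11 : X 1 1 = -X 0 0 := by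
    rw [trace_fin_two] at h2; linear_combination h2
  have h10 : X 1 0 = -star (X 0 1) := by rw [h01]; ring
  refine ⟨Complex.normSq (X 0 0) + Complex.normSq (X 0 1),
    add_nonneg (Complex.normSq_nonneg _) (Complex.normSq_nonneg _), ?_⟩
  have e0 : (Complex.normSq (X 0 0) : ℂ) = -(X 0 0 * X 0 0) := by
    rw [← Complex.mul_conj, ← Complex.star_def, h00]; ring
  have e1 : (Complex.normSq (X 0 1) : ℂ) = X 0 1 * star (X 0 1) := by
    rw [← Complex.mul_conj, ← Complex.star_def]
  ext i j
  fin_cases i <;> fin_cases j <;>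
    simp [mul_apply, Fin.sum_univ_two, h11, h10, -Complex.star_def, e0, e1] <;> ring

lemma memsu2.add {X Y : Matrix (Fin 2) (Fin 2) ℂ} (hX : memsu2 X) (hY : memsu2 Y) :
    memsu2 (X + Y) :=
  ⟨by rw [conjTranspose_add, hX.1, hY.1]; abel, by rw [trace_add, hX.2, hY.2, add_zero]⟩

lemma memsu2.smul {X : Matrix (Fin 2) (Fin 2) ℂ} (hX : memsu2 X) (r : ℝ) :
    memsu2 (r • X) :=
  ⟨by rw [conjTranspose_smul, hX.1]; simp, by rw [trace_smul, hX.2, smul_zero]⟩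

lemma memsu2.lie {X Y : Matrix (Fin 2) (Fin 2) ℂ} (hX : memsu2 X) (hY : memsu2 Y) :
    memsu2 ⁅X, Y⁆ := by
  constructor
  · rw [Ring.lie_def, conjTranspose_sub, conjTranspose_mul, conjTranspose_mul, hX.1, hY.1]
    noncomm_ring
  · rw [Ring.lie_def, trace_sub, trace_mul_comm, sub_self]

/-- The anticommutator of two elements of `su(2)` is a scalar, determined by their scalar
product. -/
lemma memsu2.anticomm {X Y : Matrix (Fin 2) (Fin 2) ℂ} (hX : memsu2 X) (hY : memsu2 Y) :
    X * Y + Y * X = -((ip2 X Y / 2) • (1 : Matrix (Fin 2) (Fin 2) ℂ)) := by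
  have hs : star (trace (X * Y)) = trace (X * Y) := by
    rw [← trace_conjTranspose, conjTranspose_mul, hX.1, hY.1, neg_mul_neg, trace_mul_comm]
  have hre : ((ip2 X Y : ℝ) : ℂ) = -2 * trace (X * Y) := by
    rw [ip2, ← Complex.conj_eq_iff_re, map_mul, ← Complex.star_def, hs]
    simp
  have h11 : X 1 1 = -X 0 0 := by
    have := hX.2; rw [trace_fin_two] at this; linear_combination this
  have k11 : Y 1 1 = -Y 0 0 := by
    have := hY.2; rw [trace_fin_two] at this; linear_combination this
  ext i j
  fin_cases i <;> fin_cases j <;>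
    simp [mul_apply, Fin.sum_univ_two, h11, k11, hre, trace_fin_two] <;> ring

/-- Conjugation by `1 + X` with `X ∈ su(2)` preserves `su(2)`, because `1 + X` is a positive
multiple of an element of `SU(2)`, its inverse being a multiple of `1 - X`. The equation
`(1 + X) * B = A * (1 + X)` and its adjoint are recorded in expanded form. -/
lemma memsu2.conj_one_add {X A B : Matrix (Fin 2) (Fin 2) ℂ} (hX : memsu2 X) (hA : memsu2 A)
    (hB : B = (1 + X)⁻¹ * A * (1 + X)) :
    IsUnit (1 + X) ∧ memsu2 B ∧ A - B = X * B - A * X ∧ A - B = X * A - B * X ∧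
      trace (B * B) = trace (A * A) ∧ trace (X * B) = trace (X * A) := by
  obtain ⟨r, hr, hXX⟩ := hX.sq_eq_s12
  have hr1 : (1 + r) ≠ 0 := by positivity
  have hl : (1 - X) * (1 + X) = (1 + r) • (1 : Matrix (Fin 2) (Fin 2) ℂ) := by
    have : (1 - X) * (1 + X) = 1 - X * X := by noncomm_ring
    rw [this, hXX, add_smul, one_smul]; abel
  have hinv : ((1 + r)⁻¹ • (1 - X)) * (1 + X) = 1 := by
    rw [smul_mul_assoc, hl, smul_smul, inv_mul_cancel₀ hr1, one_smul]
  have hu : IsUnit (1 + X) := IsUnit.of_mul_eq_one_right _ hinv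
  have hdet := (isUnit_iff_isUnit_det _).1 hu
  have hB' : B = (1 + r)⁻¹ • ((1 - X) * A * (1 + X)) := by
    rw [hB, inv_eq_left_inv hinv]; simp only [smul_mul_assoc]
  have h1 : (1 + X) * B = A * (1 + X) := by
    rw [hB, ← mul_assoc, ← mul_assoc, mul_nonsing_inv _ hdet, one_mul]
  have hBH : Bᴴ = -B := by
    rw [hB', conjTranspose_smul, conjTranspose_mul, conjTranspose_mul, conjTranspose_add,
      conjTranspose_sub, conjTranspose_one, hX.1, hA.1]
    simp only [star_trivial, ← smul_neg]
    congr 1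
    noncomm_ring
  have hcyc : ∀ Z, trace ((1 + X)⁻¹ * Z * (1 + X)) = trace Z := fun Z => by
    rw [trace_mul_comm, ← mul_assoc, mul_nonsing_inv _ hdet, one_mul]
  have h2 : A - B = X * B - A * X := by
    have e : A - B - (X * B - A * X) = A * (1 + X) - (1 + X) * B := by noncomm_ring
    rw [h1, sub_self] at e
    exact sub_eq_zero.1 e
  refine ⟨hu, ⟨hBH, by rw [hB, hcyc, hA.2]⟩, h2, ?_, ?_, ?_⟩
  · have e := congrArg conjTranspose h2
    simp only [conjTranspose_sub, conjTranspose_mul, hX.1, hA.1, hBH, neg_mul_neg] at e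
    rw [← neg_inj, ← sub_eq_zero, ← sub_eq_zero.2 e]
    abel
  · have : B * B = (1 + X)⁻¹ * (A * A) * (1 + X) := by
      calc B * B = (1 + X)⁻¹ * A * ((1 + X) * B) := by
            nth_rw 1 [hB]; simp only [mul_assoc]
        _ = _ := by rw [h1]; simp only [mul_assoc]
    rw [this, hcyc]
  · have hc : X * (1 + X)⁻¹ = (1 + X)⁻¹ * X := by
      rw [inv_eq_left_inv hinv, mul_smul_comm, smul_mul_assoc]
      congr 1; noncomm_ring
    have : X * B = (1 + X)⁻¹ * (X * A) * (1 + X) := by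
      rw [hB, ← mul_assoc, ← mul_assoc, hc]; simp only [mul_assoc]
    rw [this, hcyc]

/-- If `1 + X` conjugates `A` to `B`, where `A` and `B` are unit vectors with scalar product `s`,
then so does `1 + Y` for `Y = X / α + k [A, B]`. The conjugation relation for `X` is
`A - B = X B - A X`, linear in `X`, and `[A, B]` satisfies it up to the factor `-(1 + s) / 2`. -/
lemma cayley_shift {X Y A B : Matrix (Fin 2) (Fin 2) ℂ} {α s k : ℝ} (hα : α ≠ 0)
    (hs : 1 + s ≠ 0) (hk : k = (2 * (1 - α) / α) / (1 + s))
    (hAA : A * A = -((1 / 4 : ℝ) • (1 : Matrix (Fin 2) (Fin 2) ℂ)))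
    (hBB : B * B = -((1 / 4 : ℝ) • (1 : Matrix (Fin 2) (Fin 2) ℂ)))
    (hAB : A * B + B * A = -((s / 2) • (1 : Matrix (Fin 2) (Fin 2) ℂ)))
    (h : A - B = X * B - A * X) (hY : Y = α⁻¹ • X + k • ⁅A, B⁆) :
    A * (1 + Y) = (1 + Y) * B := by
  have hABA : A * B * A = -((s / 2) • A) + (1 / 4 : ℝ) • B := by
    have e : A * B * A = A * (A * B + B * A) - A * A * B := by noncomm_ring
    rw [e, hAB, hAA]; simp
  have hBAB : B * A * B = -((s / 2) • B) + (1 / 4 : ℝ) • A := by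
    have e : B * A * B = (A * B + B * A) * B - A * (B * B) := by noncomm_ring
    rw [e, hAB, hBB]; simp
  have hc : ⁅A, B⁆ * B - A * ⁅A, B⁆ = (-(1 + s) / 2) • (A - B) := by
    have e : ⁅A, B⁆ * B - A * ⁅A, B⁆
        = A * (B * B) - B * A * B - A * A * B + A * B * A := by
      rw [Ring.lie_def]; noncomm_ring
    rw [e, hABA, hBAB, hAA, hBB]
    simp only [mul_neg, neg_mul, mul_smul_comm, smul_mul_assoc, one_mul, mul_one]
    module
  have hYB : Y * B - A * Y = A - B := by
    have e : Y * B - A * Y = α⁻¹ • (X * B - A * X) + k • (⁅A, B⁆ * B - A * ⁅A, B⁆) := by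
      rw [hY]
      simp only [add_mul, mul_add, mul_smul_comm, smul_mul_assoc]
      module
    rw [e, hc, ← h, smul_smul, ← add_smul]
    have : α⁻¹ + k * (-(1 + s) / 2) = 1 := by rw [hk]; field_simp; ring
    rw [this, one_smul]
  have e : A * (1 + Y) - (1 + Y) * B = (A - B) - (Y * B - A * Y) := by noncomm_ring
  rw [hYB, sub_self] at e
  exact sub_eq_zero.1 e

/-- Energy balance in the frame after the step; `M - ε [P, B]` is the old momentum in that frame
and `B` the old axis. The difference of the two sides is the scalar product of `P` with the
defect of the symmetrised Cayley relation `A - B = (ε/2) [M, A + B]`. -/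
lemma energy_balance {M P A B : Matrix (Fin 2) (Fin 2) ℂ} {ε : ℝ}
    (h1 : A - B = (ε • M) * B - A * (ε • M)) (h2 : A - B = (ε • M) * A - B * (ε • M)) :
    (1 / 2) * ip2 M M + ip2 P A + (ε / 2) * ip2 ⁅M, P⁆ A
      = (1 / 2) * ip2 (M - ε • ⁅P, B⁆) (M - ε • ⁅P, B⁆) + ip2 P B
        + (ε / 2) * ip2 ⁅M - ε • ⁅P, B⁆, P⁆ B := by
  have e1 : trace (P * (A - B)) = ε * (trace (P * (M * B)) - trace (P * (A * M))) := by
    rw [h1]; simp [mul_sub, trace_sub]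
  have e2 : trace (P * (A - B)) = ε * (trace (P * (M * A)) - trace (P * (B * M))) := by
    rw [h2]; simp [mul_sub, trace_sub]
  have key : (1 / 2) * trace (M * M) + trace (P * A) + (ε / 2) * trace (⁅M, P⁆ * A)
      = (1 / 2) * trace ((M - ε • ⁅P, B⁆) * (M - ε • ⁅P, B⁆)) + trace (P * B)
        + (ε / 2) * trace (⁅M - ε • ⁅P, B⁆, P⁆ * B) := by
    simp [Ring.lie_def, trace_fin_two, mul_apply, Fin.sum_univ_two] at e1 e2 ⊢
    linear_combination (e1 + e2) / 2
  have := congrArg (fun z : ℂ => (-2 * z).re) key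
  simp [ip2] at this ⊢
  linarith

/-- One step of the discrete-time Lagrange top in the body frame:
`M′ = W⁻¹(M + ε[P,A])W`, `P′ = W⁻¹PW`, where `W ∈ SU(2)` satisfies
`2 Im(W)/tr(W) = (ε/α)M′ + (2(1−α)/α)[A,Atil]/(1+⟨A,Atil⟩)` with
`Atil = (1+εM′)⁻¹A(1+εM′)`, preserves `⟨M,A⟩` and the deformed energy
`H_ε(M,P) = ½⟨M,M⟩ + ⟨P,A⟩ + (ε/2)⟨[M,P],A⟩`. -/
theorem discrete_body_frame_integrals (ε α : ℝ) (hα : α ≠ 0)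
    (A M P : Matrix (Fin 2) (Fin 2) ℂ)
    (hA : memsu2 A) (hM : memsu2 M) (hP : memsu2 P) (hAA : ip2 A A = 1)
    (W : Matrix (Fin 2) (Fin 2) ℂ) (hW : memSU2 W) (htr : Matrix.trace W ≠ 0)
    (M' P' Atil : Matrix (Fin 2) (Fin 2) ℂ)
    (hM' : M' = W⁻¹ * (M + ε • ⁅P, A⁆) * W)
    (hP' : P' = W⁻¹ * P * W)
    (hAtil : Atil = (1 + ε • M')⁻¹ * A * (1 + ε • M'))
    (hden : 1 + ip2 A Atil ≠ 0)
    (hrel : (2 / Matrix.trace W) • imPart W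
        = (ε / α) • M' + ((2 * (1 - α) / α) / (1 + ip2 A Atil)) • ⁅A, Atil⁆) :
    IsUnit (1 + ε • M') ∧
    ip2 M' A = ip2 M A ∧
    (1 / 2) * ip2 M' M' + ip2 P' A + (ε / 2) * ip2 ⁅M', P'⁆ A
      = (1 / 2) * ip2 M M + ip2 P A + (ε / 2) * ip2 ⁅M, P⁆ A := by
  have hWi : W⁻¹ = Wᴴ := inv_eq_left_inv hW.2.1
  have hdW : IsUnit W.det := by rw [hW.2.2]; exact isUnit_one
  have hWW : W * W⁻¹ = 1 := mul_nonsing_inv _ hdW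
  have hWW' : W⁻¹ * W = 1 := nonsing_inv_mul _ hdW
  have hconj : ∀ X Y, (W⁻¹ * X * W) * (W⁻¹ * Y * W) = W⁻¹ * (X * Y) * W := fun X Y => by
    calc _ = W⁻¹ * X * (W * W⁻¹) * Y * W := by noncomm_ring
      _ = _ := by rw [hWW]; noncomm_ring
  have hip : ∀ X Y, ip2 (W⁻¹ * X * W) (W⁻¹ * Y * W) = ip2 X Y := fun X Y => by
    rw [ip2, ip2, hconj, trace_mul_comm, ← mul_assoc, hWW, one_mul]
  have hlie : ∀ X Y, ⁅W⁻¹ * X * W, W⁻¹ * Y * W⁆ = W⁻¹ * ⁅X, Y⁆ * W := fun X Y => by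
    rw [Ring.lie_def, Ring.lie_def, hconj, hconj]; noncomm_ring
  have hN : memsu2 (M + ε • ⁅P, A⁆) := hM.add ((hP.lie hA).smul ε)
  have hM's : memsu2 M' := by
    constructor
    · rw [hM', hWi, conjTranspose_mul, conjTranspose_mul, conjTranspose_conjTranspose, hN.1]
      noncomm_ring
    · rw [hM', trace_mul_comm, ← mul_assoc, hWW, one_mul, hN.2]
  obtain ⟨hu, hB, h1, h2, hBB, hXB⟩ := (hM's.smul ε).conj_one_add hA hAtil
  have hsq : ∀ Z, memsu2 Z → ip2 Z Z = 1 →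
      Z * Z = -((1 / 4 : ℝ) • (1 : Matrix (Fin 2) (Fin 2) ℂ)) := fun Z hZ h => by
    have e := hZ.anticomm hZ
    rw [h] at e
    have : Z * Z = (1 / 2 : ℝ) • (Z * Z + Z * Z) := by module
    rw [this, e]; module
  have hBB1 : ip2 Atil Atil = 1 := by rw [← hAA, ip2, ip2, hBB]
  -- `W` is `tr W / 2` times `1 + Y`, where `Y` is the left-hand side of the velocity relation.
  have hWY : W = (trace W / 2) • (1 + (2 / trace W) • imPart W) := by
    have : trace W / 2 * (2 / trace W) = 1 := by field_simp
    rw [smul_add, smul_smul, this, imPart]; module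
  have hAY := cayley_shift (X := ε • M') (Y := (2 / trace W) • imPart W) hα hden rfl
    (hsq A hA hAA) (hsq Atil hB hBB1) (hA.anticomm hB) h1
    (by rw [hrel, smul_smul, div_eq_inv_mul ε α])
  have hAW : A * W = W * Atil := by
    calc A * W = A * ((trace W / 2) • (1 + (2 / trace W) • imPart W)) := by rw [← hWY]
      _ = ((trace W / 2) • (1 + (2 / trace W) • imPart W)) * Atil := by
        rw [mul_smul_comm, smul_mul_assoc, hAY]
      _ = W * Atil := by rw [← hWY]
  have hBW : Atil = W⁻¹ * A * W := by
    rw [mul_assoc, hAW, ← mul_assoc, hWW', one_mul]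
  have hQ : W⁻¹ * M * W = M' - ε • ⁅P', Atil⁆ := by
    rw [hP', hBW, hlie, hM', mul_add, add_mul]
    simp
  refine ⟨hu, ?_, ?_⟩
  · -- `Atil` is conjugate to `A` by `1 + ε M'`, which commutes with `ε M'`; when `ε = 0`
    -- this says nothing about `M'`, but then `Atil = A`.
    have e1 : ip2 M' Atil = ip2 M' A := by
      by_cases hε : ε = 0
      · subst hε
        have : A - Atil = 0 := by simpa using h1
        rw [← sub_eq_zero.1 this]
      · simp only [smul_mul_assoc, trace_smul] at hXB
        rw [ip2, ip2, smul_right_injective ℂ hε hXB]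
    have e2 : trace (⁅P, A⁆ * A) = 0 := by
      rw [Ring.lie_def, sub_mul, trace_sub, mul_assoc A P A, trace_mul_comm A (P * A), sub_self]
    rw [← e1, hBW, hM', hip, ip2, ip2, add_mul, trace_add, smul_mul_assoc, trace_smul, e2,
      smul_zero, add_zero]
  · rw [energy_balance h1 h2, ← hQ, hip]
    rw [hBW, hP', hip, hlie, hip]
end

section
/- Let c ∈ ℝ, p ∈ su(2), and T₀, T₁, T₂ ∈ su(2) with ⟨Tⱼ, Tⱼ⟩ = 1 for j = 0,1,2 and 1 + ⟨T₀, T₁⟩ ≠ 0, 1 + ⟨T₁, T₂⟩ ≠ 0. For λ ∈ ℝ define the matrices u(λ) := 1 + λ·T₁, and ℓ₁(λ), ℓ₂(λ) by (1 + λ²/4)·ℓ₁(λ) := (λ² + cλ)·(T₁ + T₀)/(1 + ⟨T₁, T₀⟩) + (2λ − cλ²/2)·[T₀, T₁]/(1 + ⟨T₁, T₀⟩) + (1 + λ²/4)·p and (1 + λ²/4)·ℓ₂(λ) := (λ² + cλ)·(T₂ + T₁)/(1 + ⟨T₂, T₁⟩) + (2λ − cλ²/2)·[T₁, T₂]/(1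 + ⟨T₂, T₁⟩) + (1 + λ²/4)·p. Then the discrete elastic rod equation [T₁, 2·T₂/(1 + ⟨T₁, T₂⟩) + 2·T₀/(1 + ⟨T₀, T₁⟩)] + c·( (T₂ + T₁)/(1 + ⟨T₁, T₂⟩) − (T₁ + T₀)/(1 + ⟨T₀, T₁⟩) ) = [p, T₁] holds if and only if u(λ)·ℓ₂(λ) = ℓ₁(λ)·u(λ) for all λ ∈ ℝ. -/
/-!
The whole Lax defect is a multiple of the elastic rod equation. Write `T = T₁`,
`A = (T₁ + T₀)/(1 + ⟨T₀,T₁⟩)`, `B = [T₀,T₁]/(1 + ⟨T₀,T₁⟩)` and `A'`, `B'` for the analogous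
quantities built from `T₁, T₂`. In `su(2)` one has `ηζ + ζη = -½⟨η,ζ⟩ 1`
(`anticomm_of_memsu2`), so in particular `T² = -¼`, and this yields the four relations
`T A' = ½ B' - ¼`, `T B' = ½ (T - A')`, `A T = ½ B - ¼`, `B T = ½ (T - A)`
(`frame_relations_left`, `frame_relations_right`). Expanding with them gives
`(1 + λT) ℓ₂(λ) - ℓ₁(λ) (1 + λT) = λ (2 (B' - B) + c (A' - A) - [p,T])`
(`lax_defect`), where the denominator `1 + λ²/4` has cancelled. The bracket on the right vanishes
exactly when the rod equation holds; it is independent of `λ`, so `λ = 1` recovers it.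
-/

open Matrix

/-- The Lax matrix `ℓ(λ)` of the discrete elastic rod, determined by
`(1 + λ²/4)ℓ(λ) = (λ² + cλ)(T + S)/(1+⟨T,S⟩) + (2λ − cλ²/2)[S,T]/(1+⟨T,S⟩)
 + (1 + λ²/4)p` for consecutive tangent vectors `S, T`. -/
noncomputable def rodLax (c : ℝ) (p S T : Matrix (Fin 2) (Fin 2) ℂ) (lam : ℝ) :
    Matrix (Fin 2) (Fin 2) ℂ :=
  (1 + lam ^ 2 / 4)⁻¹ •
    (((lam ^ 2 + c * lam) / (1 + ip2 T S)) • (T + S)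
      + ((2 * lam - c * lam ^ 2 / 2) / (1 + ip2 T S)) • ⁅S, T⁆
      + (1 + lam ^ 2 / 4) • p)

/-- On `su(2)` the anticommutator is the scalar `-½⟨η,ζ⟩`: it equals `tr(ηζ)` by the polarized
Cayley–Hamilton identity, and that trace is real for skew-Hermitian matrices. -/
theorem anticomm_of_memsu2 {η ζ : Matrix (Fin 2) (Fin 2) ℂ} (hη : memsu2 η) (hζ : memsu2 ζ) :
    η * ζ + ζ * η = (-(ip2 η ζ) / 2) • (1 : Matrix (Fin 2) (Fin 2) ℂ) := by
  obtain ⟨hs, ht⟩ := hη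
  obtain ⟨ks, kt⟩ := hζ
  have hreal : star (Matrix.trace (η * ζ)) = Matrix.trace (η * ζ) := by
    rw [← Matrix.trace_conjTranspose, Matrix.conjTranspose_mul, hs, ks, neg_mul_neg,
      Matrix.trace_mul_comm]
  have hcast : ((-(ip2 η ζ) / 2 : ℝ) : ℂ) = Matrix.trace (η * ζ) := by
    have h1 : (((Matrix.trace (η * ζ)).re : ℝ) : ℂ) = Matrix.trace (η * ζ) :=
      Complex.conj_eq_iff_re.mp hreal
    have h2 : -(ip2 η ζ) / 2 = (Matrix.trace (η * ζ)).re := by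
      simp [ip2]
    rw [h2, h1]
  have key : η * ζ + ζ * η = Matrix.trace (η * ζ) • (1 : Matrix (Fin 2) (Fin 2) ℂ) := by
    rw [Matrix.trace_fin_two] at ht kt
    have e1 : η 1 1 = -η 0 0 := by linear_combination ht
    have e2 : ζ 1 1 = -ζ 0 0 := by linear_combination kt
    ext i j
    fin_cases i <;> fin_cases j <;>
      simp [Matrix.mul_apply, Fin.sum_univ_two, Matrix.trace_fin_two, e1, e2] <;> ring
  rw [key, ← hcast]
  ext i j
  simp

theorem ip2_comm (η ζ : Matrix (Fin 2) (Fin 2) ℂ) : ip2 η ζ = ip2 ζ η := by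
  simp only [ip2, Matrix.trace_mul_comm η ζ]

section Algebra

variable {R : Type*} [Ring R] [Algebra ℝ R]

/-- Products `T A'` and `T B'`, with `A' = (S + T)/(1 + a)`, `B' = [T,S]/(1 + a)` and
`a = ⟨T,S⟩` entering only through the anticommutator of `T` and `S`. -/
theorem frame_relations_left {T S : R} {a : ℝ} (hT : T * T = (-(1 / 4) : ℝ) • (1 : R))
    (hTS : T * S + S * T = (-a / 2) • (1 : R)) (ha : 1 + a ≠ 0) :
    T * ((1 + a)⁻¹ • (S + T)) = (1 / 2 : ℝ) • ((1 + a)⁻¹ • ⁅T, S⁆) - (1 / 4 : ℝ) • (1 : R) ∧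
    T * ((1 + a)⁻¹ • ⁅T, S⁆) = (1 / 2 : ℝ) • (T - (1 + a)⁻¹ • (S + T)) := by
  have hST : S * T = (-a / 2) • (1 : R) - T * S := eq_sub_of_add_eq' hTS
  have hTTS : T * (T * S) = (-(1 / 4) : ℝ) • S := by
    rw [← mul_assoc, hT, smul_mul_assoc, one_mul]
  constructor
  · rw [Ring.lie_def, hST, mul_smul_comm, mul_add, hT]
    match_scalars <;> field_simp <;> ring
  · rw [Ring.lie_def, hST, mul_smul_comm, mul_sub, mul_sub, mul_smul_comm, mul_one, hTTS]
    match_scalars <;> field_simp <;> ring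

/-- Mirror image of `frame_relations_left`: products `A T` and `B T`, with
`A = (T + S)/(1 + a)` and `B = [S,T]/(1 + a)`. -/
theorem frame_relations_right {T S : R} {a : ℝ} (hT : T * T = (-(1 / 4) : ℝ) • (1 : R))
    (hTS : T * S + S * T = (-a / 2) • (1 : R)) (ha : 1 + a ≠ 0) :
    ((1 + a)⁻¹ • (T + S)) * T = (1 / 2 : ℝ) • ((1 + a)⁻¹ • ⁅S, T⁆) - (1 / 4 : ℝ) • (1 : R) ∧
    ((1 + a)⁻¹ • ⁅S, T⁆) * T = (1 / 2 : ℝ) • (T - (1 + a)⁻¹ • (T + S)) := by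
  have hTS' : T * S = (-a / 2) • (1 : R) - S * T := eq_sub_of_add_eq hTS
  have hSTT : S * T * T = (-(1 / 4) : ℝ) • S := by
    rw [mul_assoc, hT, mul_smul_comm, mul_one]
  constructor
  · rw [Ring.lie_def, hTS', smul_mul_assoc, add_mul, hT]
    match_scalars <;> field_simp <;> ring
  · rw [Ring.lie_def, hTS', smul_mul_assoc, sub_mul, sub_mul, smul_mul_assoc, one_mul, hSTT]
    match_scalars <;> field_simp <;> ring

/-- The defect of the Lax relation is linear in `λ`. For the `A, B, A', B'` of the rod, the factor
multiplying `λ` is the defect of the elastic rod equation. -/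
theorem lax_defect {T A B A' B' p : R}
    (hA' : T * A' = (1 / 2 : ℝ) • B' - (1 / 4 : ℝ) • (1 : R))
    (hB' : T * B' = (1 / 2 : ℝ) • (T - A'))
    (hA : A * T = (1 / 2 : ℝ) • B - (1 / 4 : ℝ) • (1 : R))
    (hB : B * T = (1 / 2 : ℝ) • (T - A)) (c l : ℝ) :
    (1 + l • T) * ((1 + l ^ 2 / 4)⁻¹ •
        ((l ^ 2 + c * l) • A' + (2 * l - c * l ^ 2 / 2) • B' + (1 + l ^ 2 / 4) • p))
      - ((1 + l ^ 2 / 4)⁻¹ •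
        ((l ^ 2 + c * l) • A + (2 * l - c * l ^ 2 / 2) • B + (1 + l ^ 2 / 4) • p)) * (1 + l • T)
      = l • ((2 : ℝ) • (B' - B) + c • (A' - A) - ⁅p, T⁆) := by
  have hd : (1 + l ^ 2 / 4 : ℝ) ≠ 0 := by positivity
  have hd' : (4 + l ^ 2 : ℝ) ≠ 0 := by positivity
  simp only [Ring.lie_def, mul_add, add_mul, one_mul, mul_one, smul_mul_assoc, mul_smul_comm,
    hA', hB', hA, hB]
  match_scalars <;> field_simp <;> ring

end Algebra

/-- For unit vectors `T₀, T₁, T₂ ∈ su(2)` the discrete elastic rod equation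
`[T₁, 2T₂/(1+⟨T₁,T₂⟩) + 2T₀/(1+⟨T₀,T₁⟩)]
 + c((T₂+T₁)/(1+⟨T₁,T₂⟩) − (T₁+T₀)/(1+⟨T₀,T₁⟩)) = [p,T₁]`
holds iff the Lax relation `u(λ)ℓ₂(λ) = ℓ₁(λ)u(λ)` holds for all `λ ∈ ℝ`, with
`u(λ) = 1 + λT₁`. -/
theorem discrete_elastic_rod_Lax_iff (c : ℝ) (p T₀ T₁ T₂ : Matrix (Fin 2) (Fin 2) ℂ)
    (hp : memsu2 p) (h0 : memsu2 T₀) (h1 : memsu2 T₁) (h2 : memsu2 T₂)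
    (hn0 : ip2 T₀ T₀ = 1) (hn1 : ip2 T₁ T₁ = 1) (hn2 : ip2 T₂ T₂ = 1)
    (hden01 : 1 + ip2 T₀ T₁ ≠ 0) (hden12 : 1 + ip2 T₁ T₂ ≠ 0) :
    (⁅T₁, (2 / (1 + ip2 T₁ T₂)) • T₂ + (2 / (1 + ip2 T₀ T₁)) • T₀⁆
        + c • ((1 / (1 + ip2 T₁ T₂)) • (T₂ + T₁) - (1 / (1 + ip2 T₀ T₁)) • (T₁ + T₀))
      = ⁅p, T₁⁆) ↔
    (∀ lam : ℝ,
      (1 + lam • T₁) * rodLax c p T₁ T₂ lam = rodLax c p T₀ T₁ lam * (1 + lam • T₁)) := by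
  have hT : T₁ * T₁ = (-(1 / 4) : ℝ) • (1 : Matrix (Fin 2) (Fin 2) ℂ) := by
    have h := anticomm_of_memsu2 h1 h1
    rw [hn1, ← two_smul ℝ (T₁ * T₁)] at h
    have h' := congrArg (fun X => (1 / 2 : ℝ) • X) h
    simp only [smul_smul] at h'
    norm_num at h' ⊢
    exact h'
  obtain ⟨hA', hB'⟩ := frame_relations_left hT (anticomm_of_memsu2 h1 h2) hden12
  obtain ⟨hA, hB⟩ := frame_relations_right hT
    ((add_comm _ _).trans (anticomm_of_memsu2 h0 h1)) hden01
  have hdef := lax_defect (p := p) hA' hB' hA hB c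
  have hlax : ∀ l : ℝ, (1 + l • T₁) * rodLax c p T₁ T₂ l - rodLax c p T₀ T₁ l * (1 + l • T₁)
      = l • ((⁅T₁, (2 / (1 + ip2 T₁ T₂)) • T₂ + (2 / (1 + ip2 T₀ T₁)) • T₀⁆
        + c • ((1 / (1 + ip2 T₁ T₂)) • (T₂ + T₁) - (1 / (1 + ip2 T₀ T₁)) • (T₁ + T₀)))
        - ⁅p, T₁⁆) := by
    intro l
    have h := hdef l
    simp only [rodLax, ip2_comm T₂ T₁, ip2_comm T₁ T₀, div_eq_mul_inv _ (1 + ip2 T₁ T₂),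
      div_eq_mul_inv _ (1 + ip2 T₀ T₁), mul_smul, one_mul]
    rw [h]
    congr 3
    simp only [Ring.lie_def, mul_add, add_mul, smul_mul_assoc, mul_smul_comm]
    module
  constructor
  · intro h l
    rw [← sub_eq_zero, hlax, h, sub_self, smul_zero]
  · intro h
    have h' := hlax 1
    rw [h 1, sub_self, one_smul] at h'
    exact sub_eq_zero.mp h'.symm
end
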